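/- arXiv:2305.00102 — 3 statements merged into one kernel-verified Lean document; each statement's English description precedes it below -/
import Mathlib

section
/- For any two words X and Y, X ∼ Y if and only if there is a sequence of swaps between X and Y. -/
/-!
Swap-equivalence is a congruence on the free monoid of words, so its classes form a monoid `M`.
Sending each letter to its class defines an algebra homomorphism from the free algebra to the
monoid algebra `ℂ[M]`, which maps a word to the basis vector of its class. Every generator
`FG - GF` of `𝒥` is killed by it, so `X - Y ∈ 𝒥` forces the basis vectors of the classes of `X`
and `Y` to coincide, i.e. `X` and `Y` are joined by swaps. Conversely one swap changes a word by
`W₁ (FG - GF) W₂ ∈ 𝒥`, up to sign.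
-/

/-- A word is a finite sequence of letters; the letter `L` is `false`, the letter `R` is `true`. -/
abbrev Word := List Bool

/-- A word is balanced if it contains equally many `L`s and `R`s. -/
def BalancedWord (w : Word) : Prop := w.count true = w.count false

/-- The element of the free `ℂ`-algebra on two generators corresponding to a word. -/
noncomputable def toA (w : Word) : FreeAlgebra ℂ Bool :=
  (w.map (FreeAlgebra.ι ℂ)).prod

/-- The set `S = {FG - GF : F, G nonempty balanced words}`. -/
def Sset : Set (FreeAlgebra ℂ Bool) :=
  {x | ∃ F G : Word, F ≠ [] ∧ G ≠ [] ∧ BalancedWord F ∧ BalancedWord G ∧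
    x = toA F * toA G - toA G * toA F}

/-- The two-sided ideal `𝒥` generated by `S`. -/
noncomputable def Jideal : TwoSidedIdeal (FreeAlgebra ℂ Bool) := TwoSidedIdeal.span Sset

/-- `X ∼ Y` iff `X - Y ∈ 𝒥`. -/
def WEquiv (X Y : Word) : Prop := toA X - toA Y ∈ Jideal

/-- Words `X` and `Y` are related by a swap of type `(F, G)`. -/
def SwapOfType (F G X Y : Word) : Prop :=
  ∃ W₁ W₂ : Word,
    (X = W₁ ++ F ++ G ++ W₂ ∧ Y = W₁ ++ G ++ F ++ W₂) ∨
    (X = W₁ ++ G ++ F ++ W₂ ∧ Y = W₁ ++ F ++ G ++ W₂)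

/-- Words `X` and `Y` are related by a swap. -/
def RelatedBySwap (X Y : Word) : Prop :=
  ∃ F G : Word, F ≠ [] ∧ G ≠ [] ∧ BalancedWord F ∧ BalancedWord G ∧ SwapOfType F G X Y

/-- The `k`-th elevation of a word: number of `R`s minus number of `L`s among the
first `k` letters. -/
def elev (w : Word) (k : ℕ) : ℤ :=
  ((w.take k).count true : ℤ) - ((w.take k).count false : ℤ)

/-- The elevation multiset `E(W) = {e_k(W) : 0 ≤ k ≤ n}`. -/
def elevMultiset (w : Word) : Multiset ℤ :=
  (Multiset.range (w.length + 1)).map (elev w)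

/-- A word is prime if it is nonempty, balanced, and cannot be written as the
product of two nonempty balanced words. -/
def IsPrimeWord (w : Word) : Prop :=
  w ≠ [] ∧ BalancedWord w ∧
    ¬ ∃ u v : Word, u ≠ [] ∧ v ≠ [] ∧ BalancedWord u ∧ BalancedWord v ∧ w = u ++ v

/-- An upper prime: a prime word with `e_k > 0` for `1 ≤ k ≤ n - 1`. -/
def UpperPrime (w : Word) : Prop :=
  IsPrimeWord w ∧ ∀ k, 1 ≤ k → k ≤ w.length - 1 → 0 < elev w k

/-- A lower prime: a prime word with `e_k < 0` for `1 ≤ k ≤ n - 1`. -/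
def LowerPrime (w : Word) : Prop :=
  IsPrimeWord w ∧ ∀ k, 1 ≤ k → k ≤ w.length - 1 → elev w k < 0

/-- A word is reduced if it contains no contiguous subword `UD` with `U` an
upper prime and `D` a lower prime. -/
def Reduced (W : Word) : Prop :=
  ¬ ∃ U D W₁ W₂ : Word, UpperPrime U ∧ LowerPrime D ∧ W = W₁ ++ U ++ D ++ W₂

/-- Alphabetical (lexicographic) order on words, with `L < R`. -/
def WordLt (X Y : Word) : Prop := List.Lex (· < ·) X Y

theorem toA_append (X Y : Word) : toA (X ++ Y) = toA X * toA Y := by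
  simp [toA]

theorem RelatedBySwap.symm {X Y : Word} (h : RelatedBySwap X Y) : RelatedBySwap Y X := by
  obtain ⟨F, G, hF, hG, bF, bG, W₁, W₂, h⟩ := h
  exact ⟨F, G, hF, hG, bF, bG, W₁, W₂, h.symm.imp And.symm And.symm⟩

theorem RelatedBySwap.append_left {X Y : Word} (U : Word) (h : RelatedBySwap X Y) :
    RelatedBySwap (U ++ X) (U ++ Y) := by
  obtain ⟨F, G, hF, hG, bF, bG, W₁, W₂, h⟩ := h
  refine ⟨F, G, hF, hG, bF, bG, U ++ W₁, W₂, ?_⟩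
  rcases h with ⟨rfl, rfl⟩ | ⟨rfl, rfl⟩ <;> simp

theorem RelatedBySwap.append_right {X Y : Word} (V : Word) (h : RelatedBySwap X Y) :
    RelatedBySwap (X ++ V) (Y ++ V) := by
  obtain ⟨F, G, hF, hG, bF, bG, W₁, W₂, h⟩ := h
  refine ⟨F, G, hF, hG, bF, bG, W₁, W₂ ++ V, ?_⟩
  rcases h with ⟨rfl, rfl⟩ | ⟨rfl, rfl⟩ <;> simp

/-- Swap-equivalence, as a congruence on the free monoid of words. -/
def swapCon : Con (FreeMonoid Bool) where
  r X Y := Relation.ReflTransGen RelatedBySwap X.toList Y.toList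
  iseqv :=
    { refl := fun _ => .refl
      symm := fun h => h.swap.lift id fun _ _ h => RelatedBySwap.symm h
      trans := Relation.ReflTransGen.trans }
  mul' {W X Y Z} h₁ h₂ := by
    simp only [FreeMonoid.toList_mul]
    exact (h₁.lift (· ++ Y.toList) fun _ _ h => h.append_right _).trans
      (h₂.lift (X.toList ++ ·) fun _ _ h => h.append_left _)

/-- The class of a word in the quotient of the free monoid by swap-equivalence. -/
def swapClass (W : Word) : swapCon.Quotient := swapCon.mk' (FreeMonoid.ofList W)

theorem swapClass_eq_iff {X Y : Word} :
    swapClass X = swapClass Y ↔ Relation.ReflTransGen RelatedBySwap X Y :=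
  swapCon.eq

theorem swapClass_append (X Y : Word) : swapClass (X ++ Y) = swapClass X * swapClass Y := by
  simp [swapClass, FreeMonoid.ofList_append]

/-- The algebra homomorphism from the free algebra to the monoid algebra of swap classes that
sends each letter to its class. -/
noncomputable def swapHom : FreeAlgebra ℂ Bool →ₐ[ℂ] MonoidAlgebra ℂ swapCon.Quotient :=
  FreeAlgebra.lift ℂ fun b => MonoidAlgebra.of ℂ _ (swapClass [b])

theorem swapHom_toA (W : Word) : swapHom (toA W) = MonoidAlgebra.of ℂ _ (swapClass W) := by
  induction W with
  | nil => simp only [toA, swapClass, List.map_nil, List.prod_nil, FreeMonoid.ofList_nil, map_one]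
  | cons b W ih =>
    rw [← List.singleton_append, toA_append, swapClass_append, map_mul, map_mul, ih]
    simp [toA, swapHom]

theorem Jideal_le_ker : Jideal ≤ TwoSidedIdeal.ker swapHom := by
  refine TwoSidedIdeal.span_le.mpr ?_
  rintro _ ⟨F, G, hF, hG, bF, bG, rfl⟩
  have h : swapClass (F ++ G) = swapClass (G ++ F) :=
    swapClass_eq_iff.mpr (.single ⟨F, G, hF, hG, bF, bG, [], [], .inl (by simp)⟩)
  rw [SetLike.mem_coe, TwoSidedIdeal.mem_ker, ← toA_append, ← toA_append, map_sub,
    swapHom_toA, swapHom_toA, h, sub_self]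

theorem WEquiv.of_swap {X Y : Word} (h : RelatedBySwap X Y) : WEquiv X Y := by
  obtain ⟨F, G, hF, hG, bF, bG, W₁, W₂, h⟩ := h
  have key : ∀ {F G : Word}, F ≠ [] → G ≠ [] → BalancedWord F → BalancedWord G →
      WEquiv (W₁ ++ F ++ G ++ W₂) (W₁ ++ G ++ F ++ W₂) := by
    intro F G hF hG bF bG
    have hS : toA F * toA G - toA G * toA F ∈ Jideal :=
      TwoSidedIdeal.subset_span ⟨F, G, hF, hG, bF, bG, rfl⟩
    have hW := Jideal.mul_mem_right _ (toA W₂) (Jideal.mul_mem_left (toA W₁) _ hS)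
    simpa only [WEquiv, toA_append, mul_sub, sub_mul, mul_assoc] using hW
  rcases h with ⟨rfl, rfl⟩ | ⟨rfl, rfl⟩
  · exact key hF hG bF bG
  · exact key hG hF bG bF

/-- `X ∼ Y` iff there is a sequence of swaps between `X` and `Y`. -/
theorem stmt1 (X Y : Word) :
    WEquiv X Y ↔ Relation.ReflTransGen RelatedBySwap X Y := by
  constructor
  · intro h
    have hk := (TwoSidedIdeal.mem_ker _).mp (Jideal_le_ker h)
    rw [map_sub, sub_eq_zero, swapHom_toA, swapHom_toA] at hk
    exact swapClass_eq_iff.mp (MonoidAlgebra.of_injective hk)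
  · intro h
    induction h with
    | refl => simpa only [WEquiv, sub_self] using Jideal.zero_mem
    | tail _ hs ih =>
      simpa only [WEquiv, sub_add_sub_cancel] using Jideal.add_mem ih (WEquiv.of_swap hs)
end

section
/- Let P and Q be upper primes. Then PQ − QP lies in the two-sided ideal of 𝒜 generated by the set {U·(LR) − (LR)·U : U is an upper prime}, where LR denotes the two-letter word consisting of L followed by R. -/
/-- The letter encoded by a Dyck step: up-steps are `R = true`, down-steps are `L = false`. -/
def stepLetter : DyckStep → Bool
  | .U => true
  | .D => false

/-- The Dyck step encoded by a letter, inverse to `stepLetter`. -/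
def letterStep : Bool → DyckStep
  | true => .U
  | false => .D

lemma stepLetter_letterStep (b : Bool) : stepLetter (letterStep b) = b := by cases b <;> rfl

lemma count_true_map (l : List DyckStep) : (l.map stepLetter).count true = l.count .U :=
  List.count_map_of_injective l stepLetter
    (by intro a b h; cases a <;> cases b <;> simp_all [stepLetter]) .U

lemma count_false_map (l : List DyckStep) : (l.map stepLetter).count false = l.count .D :=
  List.count_map_of_injective l stepLetter
    (by intro a b h; cases a <;> cases b <;> simp_all [stepLetter]) .D

lemma elev_map (l : List DyckStep) (k : ℕ) :
    elev (l.map stepLetter) k = ((l.take k).count .U : ℤ) - (l.take k).count .D := by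
  rw [elev, ← List.map_take, count_true_map, count_false_map]

lemma upperPrime_of_isNested {p : DyckWord} (hp : p.IsNested) :
    UpperPrime (p.toList.map stepLetter) := by
  refine ⟨⟨by simpa using DyckWord.toList_ne_nil.mpr hp.1, ?_, ?_⟩, ?_⟩
  · rw [BalancedWord, count_true_map, count_false_map, p.count_U_eq_count_D]
  · rintro ⟨u, v, hu, hv, bu, -, h⟩
    have hlen : p.toList.length = u.length + v.length := by
      simpa using congrArg List.length h
    have hu' := List.length_pos_iff.mpr hu
    have hv' := List.length_pos_iff.mpr hv
    have h1 := hp.2 hu' (by omega)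
    have h2 := elev_map p.toList u.length
    rw [h, elev, List.take_left] at h2
    rw [BalancedWord] at bu
    omega
  · intro k h1 h2
    rw [List.length_map] at h2
    have h3 := hp.2 (i := k) (by omega) (by omega)
    rw [elev_map]
    omega

/-- Upper primes are words `R X L` with `X` a Dyck word. -/
lemma UpperPrime.exists_nest {w : Word} (hw : UpperPrime w) :
    ∃ X : DyckWord, w = X.nest.toList.map stepLetter := by
  obtain ⟨⟨hne, hb, -⟩, hpos⟩ := hw
  obtain ⟨l, rfl⟩ : ∃ l : List DyckStep, w = l.map stepLetter :=
    ⟨w.map letterStep, by simp [Function.comp_def, stepLetter_letterStep]⟩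
  rw [BalancedWord, count_true_map, count_false_map] at hb
  have hpos' : ∀ ⦃i⦄, 0 < i → i < l.length → (l.take i).count .D < (l.take i).count .U := by
    intro i h1 h2
    have h3 := hpos i h1 (by rw [List.length_map]; omega)
    rw [elev_map] at h3
    omega
  let p : DyckWord := ⟨l, hb, fun i ↦ by
    rcases Nat.eq_zero_or_pos i with rfl | h1
    · simp
    rcases lt_or_ge i l.length with h2 | h2
    · exact (hpos' h1 h2).le
    · rw [List.take_of_length_le h2, hb]⟩
  have hp : p.IsNested := ⟨DyckWord.toList_ne_nil.mp (by simpa using hne), hpos'⟩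
  exact ⟨p.denest hp, by rw [DyckWord.nest_denest]⟩

section Monoid

variable {M : Type*} [Monoid M] (f : DyckStep → M)

/-- The product in a monoid of the values of `f` at the successive steps of a Dyck word. -/
def dyckProd (X : DyckWord) : M := (X.toList.map f).prod

lemma dyckProd_zero : dyckProd f 0 = 1 := rfl

lemma dyckProd_add (X Y : DyckWord) : dyckProd f (X + Y) = dyckProd f X * dyckProd f Y := by
  change ((X.toList ++ Y.toList).map f).prod = _
  simp [dyckProd]

lemma dyckProd_nest (X : DyckWord) : dyckProd f X.nest = f .U * dyckProd f X * f .D := by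
  simp [dyckProd, DyckWord.nest, mul_assoc]

/-- Structural induction along the first-return decomposition. -/
lemma dyck_induction {C : DyckWord → Prop} (zero : C 0)
    (step : ∀ X Y, C X → C Y → C (X.nest + Y)) (X : DyckWord) : C X := by
  by_cases h : X = 0
  · rwa [h]
  · have h1 := DyckWord.semilength_insidePart_lt h
    have h2 := DyckWord.semilength_outsidePart_lt h
    rw [← DyckWord.nest_insidePart_add_outsidePart h]
    exact step _ _ (dyck_induction zero step _) (dyck_induction zero step _)
termination_by X.semilength

/-- An element commuting with the nested Dyck words commutes with all their products. -/
lemma commute_dyckProd {a : M} (h : ∀ X : DyckWord, Commute a (dyckProd f X.nest))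
    (X : DyckWord) : Commute a (dyckProd f X) := by
  induction X using dyck_induction with
  | zero => rw [dyckProd_zero]; exact Commute.one_right a
  | step X Y _ hY => rw [dyckProd_add]; exact (h X).mul_right hY

/-- If the valley `DU` commutes with all nested Dyck words, all Dyck words commute. -/
lemma dyckProd_commute (h : ∀ X : DyckWord, Commute (f .D * f .U) (dyckProd f X.nest))
    (X Y : DyckWord) : Commute (dyckProd f X) (dyckProd f Y) := by
  have hv := commute_dyckProd f h
  induction X using dyck_induction generalizing Y with
  | zero => rw [dyckProd_zero]; exact Commute.one_left _
  | step X X' hX hX' =>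
    rw [dyckProd_add]
    refine Commute.mul_left ?_ (hX' Y)
    refine commute_dyckProd f (fun Z ↦ ?_) Y
    have swap : ∀ A B : DyckWord, dyckProd f A.nest * dyckProd f B.nest
        = f .U * (f .D * f .U) * (dyckProd f A * dyckProd f B) * f .D := by
      intro A B
      calc dyckProd f A.nest * dyckProd f B.nest
          = f .U * (dyckProd f A * (f .D * f .U)) * dyckProd f B * f .D := by
            simp only [dyckProd_nest, mul_assoc]
        _ = _ := by rw [← (hv A).eq]; simp only [mul_assoc]
    rw [Commute, SemiconjBy, swap, swap, (hX Z).eq]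

end Monoid

/-- for upper primes `P, Q`, the element `PQ - QP` lies in the
ideal generated by `{U·(LR) - (LR)·U : U upper prime}`. -/
theorem stmt8 (P Q : Word) (hP : UpperPrime P) (hQ : UpperPrime Q) :
    toA P * toA Q - toA Q * toA P ∈
      TwoSidedIdeal.span
        {x | ∃ U : Word, UpperPrime U ∧
          x = toA U * toA [false, true] - toA [false, true] * toA U} := by
  set I := TwoSidedIdeal.span
        {x | ∃ U : Word, UpperPrime U ∧
          x = toA U * toA [false, true] - toA [false, true] * toA U} with hI
  let π := I.ringCon.mk'
  have hπ : ∀ x y, x - y ∈ I ↔ π x = π y := fun x y ↦ by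
    rw [← TwoSidedIdeal.rel_iff]
    exact (RingCon.eq I.ringCon).symm
  let f : DyckStep → I.ringCon.Quotient := fun s ↦ π (FreeAlgebra.ι ℂ (stepLetter s))
  have hf : ∀ X : DyckWord, π (toA (X.toList.map stepLetter)) = dyckProd f X := by
    intro X
    rw [toA, map_list_prod, List.map_map, List.map_map]
    rfl
  obtain ⟨X, rfl⟩ := hP.exists_nest
  obtain ⟨Y, rfl⟩ := hQ.exists_nest
  rw [hπ, map_mul, map_mul, hf, hf]
  refine (dyckProd_commute f (fun Z ↦ ?_) X.nest Y.nest).eq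
  have hZ := (hπ _ _).mp (TwoSidedIdeal.subset_span
    ⟨_, upperPrime_of_isNested (DyckWord.IsNested.nest (p := Z)), rfl⟩ : _ ∈ I)
  have hLR : π (toA [false, true]) = f .D * f .U := by
    simp [toA, f, stepLetter]
  rw [map_mul, map_mul, hf, hLR] at hZ
  exact hZ.symm
end

section
/- If U is an upper prime and W is a word with W ∼ U, then W is an upper prime with the same length as U. Similarly, if D is a lower prime and W is a word with W ∼ D, then W is a lower prime with the same length as D. -/
/-- The height of a word: the number of `R`s minus the number of `L`s. -/
def height (w : Word) : ℤ := (w.count true : ℤ) - (w.count false : ℤ)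

@[simp] lemma height_nil : height [] = 0 := by simp [height]

@[simp] lemma height_append (u v : Word) : height (u ++ v) = height u + height v := by
  simp only [height, List.count_append]
  push_cast
  ring

lemma balancedWord_iff_height (w : Word) : BalancedWord w ↔ height w = 0 := by
  simp only [BalancedWord, height]
  omega

/-- A nonempty word of height zero all of whose proper nonempty prefixes have height of the same
sign as `s`. The values `s = 1` and `s = -1` give the upper and the lower primes. -/
def SignPrime (s : ℤ) (w : Word) : Prop :=
  w ≠ [] ∧ height w = 0 ∧ ∀ u v : Word, u ≠ [] → v ≠ [] → w = u ++ v → 0 < s * height u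

/-- The proper nonempty prefixes of `w` are the `w.take k` with `1 ≤ k ≤ w.length - 1`, and the
sign condition on them already excludes a factorisation into nonempty balanced words. -/
lemma signPrime_iff (s : ℤ) (w : Word) :
    SignPrime s w ↔
      IsPrimeWord w ∧ ∀ k, 1 ≤ k → k ≤ w.length - 1 → 0 < s * elev w k := by
  constructor
  · rintro ⟨hne, hb, h⟩
    refine ⟨⟨hne, (balancedWord_iff_height w).2 hb, ?_⟩, fun k hk hk' => ?_⟩
    · rintro ⟨u, v, hu, hv, hbu, -, rfl⟩
      have := h u v hu hv rfl
      rw [(balancedWord_iff_height u).1 hbu] at this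
      simp at this
    · refine h (w.take k) (w.drop k) ?_ ?_ (List.take_append_drop k w).symm
      · rw [← List.length_pos_iff, List.length_take]
        omega
      · rw [← List.length_pos_iff, List.length_drop]
        omega
  · rintro ⟨⟨hne, hb, -⟩, h⟩
    refine ⟨hne, (balancedWord_iff_height w).1 hb, ?_⟩
    rintro u v hu hv rfl
    rw [← List.length_pos_iff] at hu hv
    simpa [elev, height] using h u.length hu (by rw [List.length_append]; omega)

lemma upperPrime_iff (w : Word) : UpperPrime w ↔ SignPrime 1 w := by
  simp [signPrime_iff, UpperPrime]

lemma lowerPrime_iff (w : Word) : LowerPrime w ↔ SignPrime (-1) w := by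
  simp [signPrime_iff, LowerPrime]

lemma SignPrime.swap {s : ℤ} {F G : Word} (hF : F ≠ []) (hG : G ≠ [])
    (bF : height F = 0) (bG : height G = 0) {P Q : Word}
    (h : SignPrime s (P ++ (F ++ G) ++ Q)) : SignPrime s (P ++ (G ++ F) ++ Q) := by
  obtain ⟨-, hb, h⟩ := h
  have hP : P ≠ [] := by
    rintro rfl
    have := h F (G ++ Q) hF (by simp [hG]) (by simp)
    simp [bF] at this
  have hQ : Q ≠ [] := by
    rintro rfl
    have := h (P ++ F) G (by simp [hF]) hG (by simp)
    have hP0 : height P = 0 := by simpa [bF, bG] using hb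
    simp [bF, hP0] at this
  refine ⟨by simp [hP], by simpa [add_comm, add_left_comm] using hb, ?_⟩
  intro u v hu hv huv
  simp only [List.append_assoc] at huv
  -- The cut between `u` and `v` falls inside `P`, `G`, `F` or `Q`.
  rcases List.append_eq_append_iff.1 huv with ⟨a, rfl, h₁⟩ | ⟨p', rfl, rfl⟩
  · rcases List.append_eq_append_iff.1 h₁ with ⟨b, rfl, h₂⟩ | ⟨g', rfl, rfl⟩
    · rcases List.append_eq_append_iff.1 h₂ with ⟨q, rfl, rfl⟩ | ⟨f', rfl, rfl⟩
      · simpa [bF, bG] using h (P ++ F ++ G ++ q) v (by simp [hP]) hv (by simp)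
      · simpa [bG] using h (P ++ b) (f' ++ G ++ Q) (by simp [hP]) (by simp [hQ]) (by simp)
    · simpa [bF] using h (P ++ F ++ a) (g' ++ Q) (by simp [hP]) (by simp [hQ]) (by simp)
  · exact h u (p' ++ F ++ G ++ Q) hu (by simp [hQ]) (by simp)

/-- The syntactic congruence of `SignPrime s`, refined by length. Elements of `FreeMonoid Bool`
are lists of letters, and multiplication is concatenation. -/
def primeCon (s : ℤ) : Con (FreeMonoid Bool) where
  r X Y := X.toList.length = Y.toList.length ∧
    ∀ P Q : Word, SignPrime s (P ++ X.toList ++ Q) ↔ SignPrime s (P ++ Y.toList ++ Q)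
  iseqv := ⟨fun _ => ⟨rfl, fun _ _ => Iff.rfl⟩,
    fun h => ⟨h.1.symm, fun P Q => (h.2 P Q).symm⟩,
    fun h h' => ⟨h.1.trans h'.1, fun P Q => (h.2 P Q).trans (h'.2 P Q)⟩⟩
  mul' := by
    intro X Y Z T h h'
    refine ⟨by simp [h.1, h'.1], fun P Q => ?_⟩
    have h₁ := h.2 P (Z.toList ++ Q)
    have h₂ := h'.2 (P ++ Y.toList) Q
    simp only [FreeMonoid.toList_mul, List.append_assoc] at h₁ h₂ ⊢
    exact h₁.trans h₂

lemma primeCon_swap (s : ℤ) {F G : Word} (hF : F ≠ []) (hG : G ≠ [])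
    (bF : BalancedWord F) (bG : BalancedWord G) :
    primeCon s (FreeMonoid.ofList F * FreeMonoid.ofList G)
      (FreeMonoid.ofList G * FreeMonoid.ofList F) := by
  rw [balancedWord_iff_height] at bF bG
  exact ⟨by simp [add_comm],
    fun _ _ => ⟨SignPrime.swap hF hG bF bG, SignPrime.swap hG hF bG bF⟩⟩

/-- The algebra map from `𝒜` to the monoid algebra of the quotient of the free monoid by
`primeCon s`. -/
noncomputable def toQuot (s : ℤ) :
    FreeAlgebra ℂ Bool →ₐ[ℂ] MonoidAlgebra ℂ (primeCon s).Quotient :=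
  FreeAlgebra.lift ℂ fun b => MonoidAlgebra.of ℂ _ ((primeCon s).mk' (FreeMonoid.of b))

lemma toQuot_toA (s : ℤ) (w : Word) :
    toQuot s (toA w) = MonoidAlgebra.of ℂ _ ((primeCon s).mk' (FreeMonoid.ofList w)) := by
  induction w with
  | nil => simp only [toA, List.map_nil, List.prod_nil, map_one, FreeMonoid.ofList_nil]
  | cons b w ih =>
    have hc : toA (b :: w) = FreeAlgebra.ι ℂ b * toA w := by simp [toA]
    rw [hc, map_mul, ih, FreeMonoid.ofList_cons, map_mul, map_mul]
    simp only [toQuot, FreeAlgebra.lift_ι_apply]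

lemma primeCon_of_wEquiv (s : ℤ) {X Y : Word} (h : WEquiv X Y) :
    primeCon s (FreeMonoid.ofList X) (FreeMonoid.ofList Y) := by
  have hle : Jideal ≤ TwoSidedIdeal.ker (toQuot s) := by
    refine TwoSidedIdeal.span_le.2 ?_
    rintro _ ⟨F, G, hF, hG, bF, bG, rfl⟩
    rw [SetLike.mem_coe, TwoSidedIdeal.mem_ker, map_sub, map_mul, map_mul, toQuot_toA, toQuot_toA,
      ← map_mul (MonoidAlgebra.of ℂ _), ← map_mul (MonoidAlgebra.of ℂ _),
      ← map_mul (primeCon s).mk', ← map_mul (primeCon s).mk', sub_eq_zero]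
    exact congrArg _ ((Con.eq _).2 (primeCon_swap s hF hG bF bG))
  have h0 := (TwoSidedIdeal.mem_ker _).1 (hle h)
  rw [map_sub, toQuot_toA, toQuot_toA, sub_eq_zero] at h0
  exact (Con.eq _).1 (MonoidAlgebra.of_injective h0)

/-- The case of empty context in the congruence `primeCon s`. -/
lemma SignPrime.of_wEquiv {s : ℤ} {U W : Word} (hU : SignPrime s U) (h : WEquiv W U) :
    SignPrime s W ∧ W.length = U.length := by
  obtain ⟨hl, hc⟩ := primeCon_of_wEquiv s h
  exact ⟨by simpa using (hc [] []).2 (by simpa using hU), hl⟩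

/-- the equivalence class of an upper prime consists of upper
primes of the same length, and likewise for lower primes. -/
theorem stmt13 :
    (∀ U W : Word, UpperPrime U → WEquiv W U →
      UpperPrime W ∧ W.length = U.length) ∧
    (∀ D W : Word, LowerPrime D → WEquiv W D →
      LowerPrime W ∧ W.length = D.length) := by
  simp only [upperPrime_iff, lowerPrime_iff]
  exact ⟨fun _ _ => SignPrime.of_wEquiv, fun _ _ => SignPrime.of_wEquiv⟩
end
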